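/- arXiv:2304.01032 — 2 statements merged into one kernel-verified Lean document; each statement's English description precedes it below -/
import Mathlib

section
/- For every integer n ≥ 0, the polynomial B_n(q) = ∏_{k=0}^{n} (1+q^{3k+1})(1+q^{3k+2}) is unimodal: writing B_n(q) = ∑_{m=0}^{d_n} a_n(m) q^m with d_n = 3(n+1)^2, there exists j with a_n(0) ≤ a_n(1) ≤ ... ≤ a_n(j) ≥ a_n(j+1) ≥ ... ≥ a_n(d_n). -/
open Polynomial Finset

/-!
Write `N = n + 1`. The degree of `B_n` is `3 N ^ 2`, its coefficients are symmetric about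
`3 N ^ 2 / 2`, and it suffices that they increase up to the middle. Multiplying by
`(1 + q ^ (3 N + 1)) (1 + q ^ (3 N + 2))` adds four shifted copies of the coefficient sequence.
Up to the middle of the old polynomial the increments of all four copies are nonnegative, so by
induction only the increments in a central window of about `3 N` positions remain
(`Central`, `borweinCoeff_mono_of_central`).

For large `N` the window is handled by Fourier inversion. With `s` the distance of a position from
the centre of antisymmetry of the increments, the increment is a positive multiple of
`∫ F(θ) sin (s θ) sin (θ / 2)` over `[0, π]`, where `F(θ)` is the product of the `2 cos (k θ / 2)`
over the `2 N` exponents `k` (`integral_diff`). Since `s ≤ 3 N`, the integrand is nonnegative on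
`[0, π / (3 N)]`, and `[0, 1 / N ^ 2]` alone contributes at least `4 ^ N s / (20 N ^ 6)`. On
`[π / (3 N), π]` the closed form of the cosine sum `∑ cos (k θ)` bounds it by `3 N / 5` (`cosSum_le`),
and the inequality of arithmetic and geometric means turns this into `|F(θ)| ≤ (13 / 5) ^ N`
(`abs_cosProd_le`). Exponential growth wins from `N = 75` on (`growth`).

For `N < 75` the central increments are computed: the polynomial is evaluated at `2 ^ 150`, which
exceeds all its coefficients, so that these are the base-`2 ^ 150` digits of a single natural number
(`digit_eval`, `central_small`).
-/

namespace Borwein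

/-! ### Coefficients and reduction to the centre -/


/-- The coefficient of `q ^ m` in the product over `k < N` of `(1 + q ^ (3 k + 1)) (1 + q ^ (3 k + 2))`,
for every integer `m` (zero outside `[0, 3 N ^ 2]`), by recursion on `N`. -/
def borweinCoeff : ℕ → ℤ → ℤ
  | 0, m => if m = 0 then 1 else 0
  | N + 1, m => borweinCoeff N m + borweinCoeff N (m - (3 * N + 1)) +
      borweinCoeff N (m - (3 * N + 2)) + borweinCoeff N (m - (6 * N + 3))

/-- The product of the theorem with `N` pairs of factors, so `B_n` is `borweinPoly (n + 1)`. -/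
noncomputable def borweinPoly (N : ℕ) : ℕ[X] :=
  ∏ k ∈ Finset.range N, ((1 + (X : ℕ[X]) ^ (3 * k + 1)) * (1 + X ^ (3 * k + 2)))

theorem borweinCoeff_neg (N : ℕ) : ∀ m : ℤ, m < 0 → borweinCoeff N m = 0 := by
  induction N with
  | zero => intro m hm; simp [borweinCoeff, hm.ne]
  | succ N ih =>
    intro m hm
    simp only [borweinCoeff]
    rw [ih m hm, ih _ (by omega), ih _ (by omega), ih _ (by omega)]
    rfl

theorem coeff_shift (p : ℕ[X]) (f : ℤ → ℤ) (hneg : ∀ m < 0, f m = 0)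
    (hf : ∀ m : ℕ, (p.coeff m : ℤ) = f m) (k m : ℕ) :
    ((p * X ^ k).coeff m : ℤ) = f (m - k) := by
  rw [coeff_mul_X_pow']
  split_ifs with h
  · rw [hf, Nat.cast_sub h]
  · rw [hneg _ (by omega)]; rfl

theorem coeff_borweinPoly (N : ℕ) : ∀ m : ℕ, ((borweinPoly N).coeff m : ℤ) = borweinCoeff N m := by
  induction N with
  | zero =>
    intro m
    simp [borweinPoly, borweinCoeff, coeff_one]
  | succ N ih =>
    intro m
    have h : borweinPoly (N + 1) = borweinPoly N + borweinPoly N * X ^ (3 * N + 1)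
        + borweinPoly N * X ^ (3 * N + 2)
        + borweinPoly N * X ^ (6 * N + 3) := by
      rw [borweinPoly, Finset.prod_range_succ, ← borweinPoly]; ring
    have hs := fun k => coeff_shift (borweinPoly N) (borweinCoeff N) (borweinCoeff_neg N) ih k m
    rw [h]
    simp only [coeff_add, Nat.cast_add, hs, ih, borweinCoeff]
    push_cast
    ring

theorem borweinCoeff_symm (N : ℕ) : ∀ m : ℤ, borweinCoeff N (3 * N ^ 2 - m) = borweinCoeff N m := by
  induction N with
  | zero => intro m; simp [borweinCoeff]
  | succ N ih =>
    intro m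
    simp only [borweinCoeff]
    rw [← ih m, ← ih (m - (3 * N + 1)), ← ih (m - (3 * N + 2)), ← ih (m - (6 * N + 3))]
    push_cast
    ring_nf

/-- The coefficients increase weakly at the positions `m` past the middle of the polynomial with
`N - 1` pairs of factors and up to the middle of the one with `N` pairs. -/
def Central (N : ℕ) : Prop :=
  ∀ m : ℤ, 3 * ((N : ℤ) - 1) ^ 2 < 2 * m → 2 * m ≤ 3 * (N : ℤ) ^ 2 → borweinCoeff N (m - 1) ≤ borweinCoeff N m

/-- The induction step: if `2 m ≤ 3 N ^ 2` the four increments that add up to the increment of the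
next coefficient sequence at `m` are nonnegative by induction; the other positions are central. -/
theorem borweinCoeff_mono_of_central (hc : ∀ N : ℕ, 1 ≤ N → Central N) (N : ℕ) :
    ∀ m : ℤ, 2 * m ≤ 3 * (N : ℤ) ^ 2 → borweinCoeff N (m - 1) ≤ borweinCoeff N m := by
  induction N with
  | zero =>
    intro m hm
    rw [borweinCoeff_neg 0 (m - 1) (by simp at hm; omega)]
    simp only [borweinCoeff]; split_ifs <;> simp
  | succ N ih =>
    intro m hm
    by_cases h : 3 * (N : ℤ) ^ 2 < 2 * m
    · exact hc (N + 1) (by omega) m (by push_cast; simpa using h) hm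
    · push Not at h
      have h1 := ih m h
      have h2 := ih (m - (3 * N + 1)) (by omega)
      have h3 := ih (m - (3 * N + 2)) (by omega)
      have h4 := ih (m - (6 * N + 3)) (by omega)
      simp only [borweinCoeff]
      have e : ∀ c : ℤ, m - 1 - c = m - c - 1 := fun c => by ring
      simp only [e]
      linarith

theorem borweinCoeff_le_of_le (hc : ∀ N : ℕ, 1 ≤ N → Central N) (N : ℕ) (a b : ℤ) (hab : a ≤ b)
    (hb : 2 * b ≤ 3 * (N : ℤ) ^ 2) : borweinCoeff N a ≤ borweinCoeff N b := by
  induction b, hab using Int.leInduction with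
  | base => exact le_rfl
  | succ c hac ih =>
    have := borweinCoeff_mono_of_central hc N (c + 1) hb
    rw [add_sub_cancel_right] at this
    exact (ih (by linarith)).trans this

/-! ### Small cases by digit extraction -/

/-- Whether the lowest `c + 1` base-`W` digits of `Q`, read from the lowest one up, increase weakly. -/
def scan (W : ℕ) : ℕ → ℕ → Bool
  | 0, _ => true
  | c + 1, Q => Nat.ble (Q % W) (Q / W % W) && scan W c (Q / W)

/-- Whether the central base-`W` digits of `P`, from position `3 (N - 1) ^ 2 / 2` to `3 N ^ 2 / 2`,
increase weakly. -/
def midOk (W N P : ℕ) : Bool :=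
  scan W (3 * N ^ 2 / 2 - 3 * (N - 1) ^ 2 / 2)
    (P / W ^ (3 * (N - 1) ^ 2 / 2) % W ^ (3 * N ^ 2 / 2 - 3 * (N - 1) ^ 2 / 2 + 1))

/-- Runs `midOk` for `f` consecutive values of the index, starting at `N` with `P` the value at `W` of
the corresponding polynomial. Matching on `P` makes the kernel evaluate it to a numeral at each step. -/
def checkFrom (W : ℕ) : ℕ → ℕ → ℕ → Bool
  | 0, _, _ => true
  | _ + 1, _, 0 => false
  | f + 1, N, P + 1 => midOk W N (P + 1) &&
      checkFrom W f (N + 1) ((P + 1) * ((1 + W ^ (3 * N + 1)) * (1 + W ^ (3 * N + 2))))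

theorem checkFrom_ok : checkFrom (2 ^ 150) 75 0 1 = true := by decide +kernel

theorem scan_spec (W : ℕ) : ∀ c Q : ℕ, scan W c Q = true →
    ∀ i < c, Q / W ^ i % W ≤ Q / W ^ (i + 1) % W := by
  intro c
  induction c with
  | zero => intro Q _ i hi; omega
  | succ c ih =>
    intro Q h i hi
    simp only [scan, Bool.and_eq_true] at h
    rcases i with _ | i
    · simpa using Nat.le_of_ble_eq_true h.1
    · have := ih _ h.2 i (by omega)
      rwa [Nat.div_div_eq_div_mul, Nat.div_div_eq_div_mul, ← pow_succ', ← pow_succ'] at this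

theorem digit_block (W P L c i : ℕ) (hi : i ≤ c) :
    P / W ^ L % W ^ (c + 1) / W ^ i % W = P / W ^ (L + i) % W := by
  obtain ⟨e, rfl⟩ := Nat.exists_eq_add_of_le hi
  rw [add_assoc, pow_add W i, Nat.mod_mul_right_div_self, Nat.div_div_eq_div_mul, ← pow_add,
    Nat.mod_mod_of_dvd _ (dvd_pow_self W (by omega))]

/-- If all coefficients of `p` are less than `W`, they are the base-`W` digits of `p(W)`. -/
theorem digit_eval (W : ℕ) (m : ℕ) : ∀ p : ℕ[X], (∀ i, p.coeff i < W) →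
    p.eval W / W ^ m % W = p.coeff m := by
  induction m with
  | zero =>
    intro p hp
    rw [← divX_mul_X_add p]
    simp [Nat.mod_eq_of_lt (hp 0)]
  | succ m ih =>
    intro p hp
    have hW : 0 < W := (Nat.zero_le _).trans_lt (hp 0)
    have h : p.eval W / W = p.divX.eval W := by
      conv_lhs => rw [← divX_mul_X_add p]
      rw [eval_add, eval_mul, eval_X, eval_C, Nat.add_div_of_dvd_right (Dvd.intro_left _ rfl),
        Nat.mul_div_cancel _ hW, Nat.div_eq_of_lt (hp 0), add_zero]
    rw [pow_succ', ← Nat.div_div_eq_div_mul, h, ih _ fun i => by rw [coeff_divX]; exact hp _,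
      coeff_divX]

theorem borweinCoeff_le (N : ℕ) : ∀ m : ℤ, borweinCoeff N m ≤ 4 ^ N := by
  induction N with
  | zero => intro m; simp only [borweinCoeff]; split_ifs <;> simp
  | succ N ih =>
    intro m
    simp only [borweinCoeff]
    have := ih m
    have := ih (m - (3 * N + 1))
    have := ih (m - (3 * N + 2))
    have := ih (m - (6 * N + 3))
    rw [pow_succ]
    linarith

theorem central_of_midOk (W N : ℕ) (hN : 1 ≤ N) (hW : 4 ^ N < W)
    (h : midOk W N ((borweinPoly N).eval W) = true) : Central N := by
  intro m h1 h2
  have hL : 2 * (3 * (N - 1) ^ 2 / 2) ≤ 3 * (N - 1) ^ 2 := Nat.mul_div_le _ _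
  have hL' : 3 * (N - 1) ^ 2 < 2 * (3 * (N - 1) ^ 2 / 2) + 2 := by omega
  have hH' : 3 * N ^ 2 < 2 * (3 * N ^ 2 / 2) + 2 := by omega
  rw [midOk] at h
  have hspec := scan_spec _ _ _ h
  zify [hN] at hL hL' hH'
  rw [← Nat.cast_ofNat (R := ℤ) (n := 2)] at hL hL' hH'
  generalize hLd : 3 * (N - 1) ^ 2 / 2 = L at *
  generalize hHd : 3 * N ^ 2 / 2 = H at *
  have hL2 : 2 * (L : ℤ) ≤ 3 * ((N : ℤ) - 1) ^ 2 := by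
    rw [← hLd]; push_cast [hN]; omega
  have hH2 : 3 * (N : ℤ) ^ 2 < 2 * H + 2 := by
    rw [← hHd]; push_cast; omega
  obtain ⟨i, hi⟩ : ∃ i : ℕ, m = L + i + 1 := ⟨(m - L - 1).toNat, by omega⟩
  have hs := hspec i (by omega)
  have hlt : ∀ j, (borweinPoly N).coeff j < W := fun j => by
    have := borweinCoeff_le N j
    rw [← coeff_borweinPoly] at this
    exact lt_of_le_of_lt (by exact_mod_cast this) hW
  rw [digit_block _ _ _ _ _ (by omega), digit_block _ _ _ _ _ (by omega),
    digit_eval _ _ _ hlt, digit_eval _ _ _ hlt] at hs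
  zify at hs
  rw [coeff_borweinPoly, coeff_borweinPoly] at hs
  rw [hi]
  convert hs using 2 <;> push_cast <;> ring

theorem checkFrom_spec (W f : ℕ) : ∀ N, checkFrom W f N ((borweinPoly N).eval W) = true →
    ∀ M, N ≤ M → M < N + f → midOk W M ((borweinPoly M).eval W) = true := by
  induction f with
  | zero => intro N _ M; omega
  | succ f ih =>
    intro N h M hM hM'
    obtain ⟨P, hP⟩ : ∃ P, (borweinPoly N).eval W = P := ⟨_, rfl⟩
    rw [hP] at h
    rcases P with _ | P
    · simp [checkFrom] at h
    · simp only [checkFrom, Bool.and_eq_true] at h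
      rw [← hP] at h
      rcases hM.eq_or_lt with rfl | hlt
      · exact h.1
      · refine ih (N + 1) ?_ M hlt (by omega)
        have : (borweinPoly (N + 1)).eval W =
            (borweinPoly N).eval W * ((1 + W ^ (3 * N + 1)) * (1 + W ^ (3 * N + 2))) := by
          rw [borweinPoly, Finset.prod_range_succ, ← borweinPoly]
          simp
        rw [this]
        exact h.2

theorem central_small (N : ℕ) (h1 : 1 ≤ N) (h : N < 75) : Central N := by
  have hr : checkFrom (2 ^ 150) 75 0 ((borweinPoly 0).eval (2 ^ 150)) = true := by
    rw [show (borweinPoly 0).eval (2 ^ 150) = 1 by simp [borweinPoly]]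
    exact checkFrom_ok
  refine central_of_midOk (2 ^ 150) N h1 ?_ (checkFrom_spec _ _ 0 hr N (Nat.zero_le _) (by omega))
  calc 4 ^ N < 4 ^ 75 := Nat.pow_lt_pow_right (by norm_num) h
    _ = 2 ^ 150 := by norm_num

/-! ### Fourier inversion -/

/-- The product of `2 cos (k θ / 2)` over the exponents `k` of the first `N` pairs of factors: the
polynomial at `exp (i θ)`, stripped of the phase `exp (3 i N ^ 2 θ / 2)`. -/
noncomputable def cosProd (N : ℕ) (θ : ℝ) : ℝ :=
  ∏ k ∈ Finset.range N,
    (2 * Real.cos ((3 * k + 1) * θ / 2)) * (2 * Real.cos ((3 * k + 2) * θ / 2))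

theorem continuous_cosProd (N : ℕ) : Continuous (cosProd N) := by
  unfold cosProd; fun_prop

/-- Fourier inversion. The induction uses that multiplication by `4 cos a cos b` splits a cosine into
four shifted ones, matching the recursion of the coefficients. -/
theorem integral_cosProd (N : ℕ) : ∀ m : ℤ,
    ∫ θ in (0 : ℝ)..Real.pi, cosProd N θ * Real.cos ((m - 3 * N ^ 2 / 2) * θ) =
      Real.pi * borweinCoeff N m := by
  induction N with
  | zero =>
    intro m
    by_cases h : m = 0
    · simp [cosProd, borweinCoeff, h]
    · have h' : (m : ℝ) ≠ 0 := by exact_mod_cast h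
      simp [cosProd, borweinCoeff, h, intervalIntegral.integral_comp_mul_left (fun x => Real.cos x) h',
        Real.sin_int_mul_pi]
  | succ N ih =>
    intro m
    have hint : ∀ c : ℤ, IntervalIntegrable
        (fun θ => cosProd N θ * Real.cos ((c - 3 * N ^ 2 / 2) * θ)) MeasureTheory.volume 0 Real.pi :=
      fun c => ((continuous_cosProd N).mul (by fun_prop)).intervalIntegrable _ _
    have key : ∀ θ : ℝ, cosProd (N + 1) θ * Real.cos ((m - 3 * ((N + 1 : ℕ) : ℝ) ^ 2 / 2) * θ) =
        cosProd N θ * Real.cos ((m - 3 * N ^ 2 / 2) * θ)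
        + cosProd N θ * Real.cos (((m - (3 * N + 1) : ℤ) - 3 * N ^ 2 / 2) * θ)
        + cosProd N θ * Real.cos (((m - (3 * N + 2) : ℤ) - 3 * N ^ 2 / 2) * θ)
        + cosProd N θ * Real.cos (((m - (6 * N + 3) : ℤ) - 3 * N ^ 2 / 2) * θ) := by
      intro θ
      rw [cosProd, Finset.prod_range_succ, ← cosProd]
      have e := Real.cos_add_cos
      set x : ℝ := (m - 3 * ((N + 1 : ℕ) : ℝ) ^ 2 / 2) * θ with hx
      set a : ℝ := (3 * N + 1) * θ / 2 with ha
      set b : ℝ := (3 * N + 2) * θ / 2 with hb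
      rw [show (m - 3 * (N : ℝ) ^ 2 / 2) * θ = x + (a + b) by
          rw [hx, ha, hb]; push_cast; ring,
        show (((m - (3 * N + 1) : ℤ) : ℝ) - 3 * (N : ℝ) ^ 2 / 2) * θ = x + (b - a) by
          rw [hx, ha, hb]; push_cast; ring,
        show (((m - (3 * N + 2) : ℤ) : ℝ) - 3 * (N : ℝ) ^ 2 / 2) * θ = x - (b - a) by
          rw [hx, ha, hb]; push_cast; ring,
        show (((m - (6 * N + 3) : ℤ) : ℝ) - 3 * (N : ℝ) ^ 2 / 2) * θ = x - (a + b) by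
          rw [hx, ha, hb]; push_cast; ring]
      simp only [Real.cos_add, Real.cos_sub, Real.sin_add, Real.sin_sub]
      ring
    simp only [key]
    rw [intervalIntegral.integral_add (((hint _).add (hint _)).add (hint _)) (hint _),
      intervalIntegral.integral_add ((hint _).add (hint _)) (hint _),
      intervalIntegral.integral_add (hint _) (hint _), ih, ih, ih, ih]
    simp only [borweinCoeff]
    push_cast
    ring

/-- The increment at `m` as an integral; `s` is half-integral or integral, and positive up to the
middle. -/
theorem integral_diff (N : ℕ) (m : ℤ) (s : ℝ) (hs : s = (3 * N ^ 2 + 1) / 2 - m) :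
    2 * ∫ θ in (0 : ℝ)..Real.pi, cosProd N θ * (Real.sin (s * θ) * Real.sin (θ / 2)) =
      Real.pi * (borweinCoeff N m - borweinCoeff N (m - 1)) := by
  rw [mul_sub, ← integral_cosProd, ← integral_cosProd, ← intervalIntegral.integral_sub,
    ← intervalIntegral.integral_const_mul]
  · congr 1
    ext θ
    rw [show (m - 3 * (N : ℝ) ^ 2 / 2) * θ = θ / 2 - s * θ by rw [hs]; ring,
      show (((m - 1 : ℤ) : ℝ) - 3 * (N : ℝ) ^ 2 / 2) * θ = - (θ / 2 + s * θ) by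
        rw [hs]; push_cast; ring, Real.cos_neg, Real.cos_add, Real.cos_sub]
    ring
  all_goals exact ((continuous_cosProd N).mul (by fun_prop)).intervalIntegrable _ _

/-! ### Bounds for the cosine product -/

/-- The sum of `cos (k θ)` over the exponents `k` of the first `N` pairs of factors. -/
noncomputable def cosSum (N : ℕ) (θ : ℝ) : ℝ :=
  ∑ k ∈ Finset.range N, (Real.cos ((3 * k + 1) * θ) + Real.cos ((3 * k + 2) * θ))

/-- The closed form of the cosine sum, multiplied out since `sin (3 θ / 2)` vanishes at `2 π / 3`. -/
theorem cosSum_mul_sin (N : ℕ) (θ : ℝ) :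
    cosSum N θ * Real.sin (3 * θ / 2) = Real.cos (θ / 2) * Real.sin (3 * N * θ) := by
  induction N with
  | zero => simp [cosSum]
  | succ N ih =>
    rw [cosSum, Finset.sum_range_succ, ← cosSum, add_mul, ih]
    set c : ℝ := (3 * N + 3 / 2) * θ with hc
    rw [show (3 * (N : ℝ) + 1) * θ = c - θ / 2 by rw [hc]; ring,
      show (3 * (N : ℝ) + 2) * θ = c + θ / 2 by rw [hc]; ring,
      show 3 * (N : ℝ) * θ = c - 3 * θ / 2 by rw [hc]; ring,
      show 3 * ((N + 1 : ℕ) : ℝ) * θ = c + 3 * θ / 2 by rw [hc]; push_cast; ring]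
    simp only [Real.cos_add, Real.cos_sub, Real.sin_add, Real.sin_sub]
    ring

/-- An inequality of arithmetic and geometric means: `F(θ) ^ 2` is the product of the `2 N` numbers
`2 + 2 cos (k θ) ≥ 0`, whose mean is at most `13 / 5`. It is applied in the form
`y ≤ c exp (y / c - 1)` with `c = 13 / 5`. -/
theorem abs_cosProd_le (N : ℕ) (θ : ℝ) (hS : cosSum N θ ≤ 3 * N / 5) :
    |cosProd N θ| ≤ (13 / 5) ^ N := by
  refine abs_le_of_sq_le_sq ?_ (by positivity)
  have h1 : cosProd N θ ^ 2 = ∏ k ∈ Finset.range N,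
      ((2 + 2 * Real.cos ((3 * k + 1) * θ)) * (2 + 2 * Real.cos ((3 * k + 2) * θ))) := by
    rw [cosProd, ← Finset.prod_pow]
    refine Finset.prod_congr rfl fun k _ => ?_
    rw [show (3 * (k : ℝ) + 1) * θ = 2 * ((3 * k + 1) * θ / 2) by ring,
      show (3 * (k : ℝ) + 2) * θ = 2 * ((3 * k + 2) * θ / 2) by ring, Real.cos_two_mul,
      Real.cos_two_mul]
    ring_nf
  have hy : ∀ x : ℝ, 0 ≤ 2 + 2 * Real.cos x := fun x => by linarith [Real.neg_one_le_cos x]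
  have hle : ∀ x : ℝ, 2 + 2 * Real.cos x ≤
      13 / 5 * Real.exp ((2 + 2 * Real.cos x) / (13 / 5) - 1) := fun x => by
    have := Real.add_one_le_exp ((2 + 2 * Real.cos x) / (13 / 5) - 1)
    rw [sub_add_cancel, div_le_iff₀ (by norm_num)] at this
    linarith
  calc cosProd N θ ^ 2 ≤ ∏ k ∈ Finset.range N, ((13 / 5) ^ 2 * Real.exp
        (10 / 13 * (Real.cos ((3 * k + 1) * θ) + Real.cos ((3 * k + 2) * θ)) - 6 / 13)) := by
        rw [h1]
        refine Finset.prod_le_prod (fun k _ => mul_nonneg (hy _) (hy _)) fun k _ => ?_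
        refine (mul_le_mul (hle _) (hle _) (hy _) (by positivity)).trans_eq ?_
        rw [mul_mul_mul_comm, ← Real.exp_add]
        ring_nf
    _ = ((13 / 5) ^ N) ^ 2 * Real.exp (10 / 13 * cosSum N θ - N * (6 / 13)) := by
        rw [Finset.prod_mul_distrib, ← Real.exp_sum, Finset.sum_sub_distrib, ← Finset.mul_sum, ← cosSum]
        simp only [Finset.prod_const, Finset.card_range, Finset.sum_const, nsmul_eq_mul]
        rw [← pow_mul, ← pow_mul, mul_comm 2 N]
    _ ≤ ((13 / 5) ^ N) ^ 2 * 1 := by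
        gcongr
        rw [Real.exp_le_one_iff]
        linarith
    _ = _ := mul_one _

/-- Away from the peak at `0` the cosine sum is at most `3 N / 5`. Where `|sin (3 θ / 2)| ≥ 2 / N`
the closed form gives `N / 2`. The remaining `θ` lie near `0`, where `sin (3 N θ) ≤ 0`, or near
`2 π / 3`, where the sum is nonpositive at distances up to `π / (3 N)` and the factor
`cos (θ / 2) ≈ 1 / 2` supplies the bound beyond. -/
theorem cosSum_le (N : ℕ) (hN : 20 ≤ N) (θ : ℝ) (h0 : Real.pi / (3 * N) ≤ θ) (h1 : θ ≤ Real.pi) :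
    cosSum N θ ≤ 3 * N / 5 := by
  have hπ := Real.pi_pos
  have hN' : (20 : ℝ) ≤ N := by exact_mod_cast hN
  have hNpos : (0 : ℝ) < N := by linarith
  have hθ : 0 < θ := lt_of_lt_of_le (by positivity) h0
  rw [div_le_iff₀ (by positivity)] at h0
  have hid := cosSum_mul_sin N θ
  set u := Real.sin (3 * θ / 2) with hu
  have hc0 : 0 ≤ Real.cos (θ / 2) := Real.cos_nonneg_of_mem_Icc ⟨by linarith, by linarith⟩
  have hc1 := Real.cos_le_one (θ / 2)
  -- The closed form for sines bounded below: `|u| ≥ δ / N` and `cos (θ / 2) ≤ C`.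
  have big : ∀ C δ : ℝ, 0 ≤ C → 0 < δ → Real.cos (θ / 2) ≤ C → δ ≤ N * |u| →
      cosSum N θ ≤ C / δ * N := by
    intro C δ hC hδ hcC hδu
    have h2 : |cosSum N θ| * |u| ≤ C := by
      rw [← abs_mul, hid, abs_mul, abs_of_nonneg hc0]
      exact (mul_le_of_le_one_right hc0 (Real.abs_sin_le_one _)).trans hcC
    have h3 : |cosSum N θ| * δ ≤ C * N := by
      calc |cosSum N θ| * δ ≤ |cosSum N θ| * (N * |u|) := by gcongr
        _ = |cosSum N θ| * |u| * N := by ring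
        _ ≤ C * N := by gcongr
    rw [div_mul_eq_mul_div, le_div_iff₀ hδ]
    exact (mul_le_mul_of_nonneg_right (le_abs_self _) hδ.le).trans h3
  by_cases hu2 : 2 ≤ N * |u|
  · exact (big 1 2 (by norm_num) (by norm_num) hc1 hu2).trans (by linarith)
  push Not at hu2
  rcases le_total θ (Real.pi / 3) with hθ3 | hθ3
  · -- Here `3 θ < 2 π / N`, so `3 N θ` lies in `[π, 2 π]`.
    have hj : 2 / Real.pi * (3 * θ / 2) ≤ u :=
      Real.mul_le_sin (by positivity) (by linarith)
    have hupos : 0 < u := lt_of_lt_of_le (by positivity) hj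
    rw [abs_of_pos hupos] at hu2
    have h3 : N * (3 * θ) < 2 * Real.pi := by
      have : N * (2 / Real.pi * (3 * θ / 2)) < 2 := lt_of_le_of_lt (by gcongr) hu2
      have e : N * (2 / Real.pi * (3 * θ / 2)) = N * (3 * θ) / Real.pi := by field_simp
      rwa [e, div_lt_iff₀ hπ] at this
    have hsin : Real.sin (3 * N * θ) ≤ 0 := by
      rw [← Real.sin_sub_two_pi]
      exact Real.sin_nonpos_of_nonpos_of_neg_pi_le (by linarith) (by linarith)
    have : cosSum N θ * u ≤ 0 := by rw [hid]; exact mul_nonpos_of_nonneg_of_nonpos hc0 hsin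
    have : cosSum N θ ≤ 0 := nonpos_of_mul_nonpos_left this hupos
    exact this.trans (by positivity)
  · -- Centre at `2 π / 3`, the zero of `sin (3 θ / 2)`.
    set y := 3 * θ / 2 - Real.pi with hy
    have hyabs : |y| ≤ Real.pi / 2 := abs_le.2 ⟨by linarith, by linarith⟩
    have huy : u = - Real.sin y := by rw [hu, hy, Real.sin_sub_pi, neg_neg]
    have hj : 2 / Real.pi * |y| ≤ |u| := by
      rw [huy, abs_neg]; exact Real.mul_abs_le_abs_sin hyabs
    have hj' : 2 * (N * |y|) ≤ N * |u| * Real.pi := by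
      have : N * (2 / Real.pi * |y|) ≤ N * |u| := by gcongr
      have e : N * (2 / Real.pi * |y|) = 2 * (N * |y|) / Real.pi := by field_simp
      rwa [e, div_le_iff₀ hπ] at this
    by_cases hy2 : Real.pi / 2 ≤ N * |y|
    · have hδ : 1 ≤ N * |u| := by
        by_contra! hlt
        nlinarith
      have hyN : N * |y| ≤ Real.pi := by nlinarith
      have hcos : Real.cos (θ / 2) ≤ 3 / 5 := by
        have hle := Real.abs_cos_sub_cos_le (θ / 2) (Real.pi / 3)
        rw [Real.cos_pi_div_three, show θ / 2 - Real.pi / 3 = y / 3 by rw [hy]; ring, abs_div,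
          abs_of_pos (by norm_num : (0:ℝ) < 3)] at hle
        have := (abs_le.1 hle).2
        have : 20 * |y| ≤ 3.15 := by
          have := mul_le_mul_of_nonneg_right hN' (abs_nonneg y)
          linarith [Real.pi_lt_d2]
        linarith
      exact (big (3 / 5) 1 (by norm_num) (by norm_num) hcos hδ).trans (by linarith)
    · push Not at hy2
      -- At `y = 0` the closed form reads `0 = 0`, so the sum is evaluated directly.
      rcases eq_or_ne y 0 with hy0 | hy0
      · have hθe : θ = 2 * Real.pi / 3 := by linarith
        have hSneg : cosSum N θ ≤ 0 := by
          refine Finset.sum_nonpos fun k _ => ?_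
          rw [hθe, show (3 * (k : ℝ) + 1) * (2 * Real.pi / 3) = 2 * Real.pi / 3 + k * (2 * Real.pi) by
              ring, show (3 * (k : ℝ) + 2) * (2 * Real.pi / 3) = 4 * Real.pi / 3 + k * (2 * Real.pi) by
              ring, Real.cos_add_nat_mul_two_pi, Real.cos_add_nat_mul_two_pi]
          exact add_nonpos
            (Real.cos_nonpos_of_pi_div_two_le_of_le (by linarith) (by linarith))
            (Real.cos_nonpos_of_pi_div_two_le_of_le (by linarith) (by linarith))
        exact hSneg.trans (by positivity)
      · have hsin : Real.sin (3 * N * θ) = Real.sin (2 * N * y) := by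
          rw [show 3 * N * θ = 2 * N * y + N * (2 * Real.pi) by rw [hy]; ring,
            Real.sin_add_nat_mul_two_pi]
        have hprod : 0 ≤ Real.sin (2 * N * y) * Real.sin y := by
          rcases le_total 0 y with hp | hp
          · rw [abs_of_nonneg hp] at hy2 hyabs
            exact mul_nonneg (Real.sin_nonneg_of_nonneg_of_le_pi (by positivity) (by linarith))
              (Real.sin_nonneg_of_nonneg_of_le_pi hp (by linarith))
          · rw [abs_of_nonpos hp] at hy2 hyabs
            exact mul_nonneg_of_nonpos_of_nonpos
              (Real.sin_nonpos_of_nonpos_of_neg_pi_le (by nlinarith) (by linarith))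
              (Real.sin_nonpos_of_nonpos_of_neg_pi_le hp (by linarith))
        have hupos : 0 < u ^ 2 := by
          have : 0 < |u| := lt_of_lt_of_le (mul_pos (by positivity) (abs_pos.2 hy0)) hj
          rw [← sq_abs]; positivity
        have : cosSum N θ * u ^ 2 ≤ 0 := by
          rw [sq, ← mul_assoc, hid, hsin, huy]
          nlinarith [mul_nonneg hc0 hprod]
        have : cosSum N θ ≤ 0 := nonpos_of_mul_nonpos_left this hupos
        exact this.trans (by positivity)

theorem cosProd_nonneg (N : ℕ) (θ : ℝ) (h0 : 0 ≤ θ) (h1 : 3 * N * θ ≤ Real.pi) : 0 ≤ cosProd N θ := by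
  refine Finset.prod_nonneg fun k hk => ?_
  have hk' : (k : ℝ) + 1 ≤ N := by exact_mod_cast Finset.mem_range.1 hk
  have hkθ : ((k : ℝ) + 1) * θ ≤ N * θ := by gcongr
  have hk0 : 0 ≤ (k : ℝ) * θ := by positivity
  have hπ := Real.pi_pos
  have hc : ∀ x : ℝ, 0 ≤ x → 2 * x ≤ Real.pi → 0 ≤ 2 * Real.cos x := fun x hx hx' =>
    mul_nonneg zero_le_two (Real.cos_nonneg_of_mem_Icc ⟨by linarith, by linarith⟩)
  exact mul_nonneg (hc _ (by linarith) (by linarith)) (hc _ (by linarith) (by linarith))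

/-- Near `0` the product keeps three quarters of its maximum `4 ^ N`, by `cos x ≥ 1 - x ^ 2 / 2` and
Bernoulli's inequality. -/
theorem le_cosProd (N : ℕ) (hN : 9 ≤ N) (θ : ℝ) (h0 : 0 ≤ θ) (h1 : θ ≤ 1 / N ^ 2) :
    4 ^ N * (3 / 4) ≤ cosProd N θ := by
  have hN' : (9 : ℝ) ≤ N := by exact_mod_cast hN
  have hNpos : (0 : ℝ) < N := by linarith
  set ε : ℝ := 9 / (8 * N ^ 2) with hε
  have hε1 : ε ≤ 1 := by
    rw [hε, div_le_one (by positivity)]; nlinarith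
  have hNθ : N * θ ≤ 1 / N := by
    calc N * θ ≤ N * (1 / N ^ 2) := by gcongr
      _ = 1 / N := by field_simp
  have hcos : ∀ x : ℝ, 0 ≤ x → 2 * x ≤ 3 * (N * θ) → 2 * (1 - ε) ≤ 2 * Real.cos x := by
    intro x hx hx'
    have hx2 : x ≤ 3 / 2 * (1 / N) := by linarith
    have hsq : x ^ 2 ≤ (3 / 2 * (1 / N)) ^ 2 := by gcongr
    have e : (3 / 2 * (1 / (N : ℝ))) ^ 2 = 2 * ε := by rw [hε]; field_simp; norm_num
    have := Real.one_sub_sq_div_two_le_cos (x := x)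
    linarith
  calc (4 : ℝ) ^ N * (3 / 4) ≤ 4 ^ N * (1 - ε) ^ (2 * N) := by
        gcongr
        have hb := one_add_mul_le_pow (a := -ε) (by linarith) (2 * N)
        have e : ((2 * N : ℕ) : ℝ) * -ε = - (9 / 4 * (1 / N)) := by
          rw [hε]; push_cast; field_simp; norm_num
        have : 1 / (N : ℝ) ≤ 1 / 9 := one_div_le_one_div_of_le (by norm_num) hN'
        rw [e] at hb
        rw [sub_eq_add_neg]
        linarith
    _ = ∏ k ∈ Finset.range N, (2 * (1 - ε)) * (2 * (1 - ε)) := by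
        rw [Finset.prod_const, Finset.card_range, pow_mul, ← mul_pow]
        ring_nf
    _ ≤ cosProd N θ := by
        refine Finset.prod_le_prod (fun k _ => mul_self_nonneg _) fun k hk => ?_
        have hk' : (k : ℝ) + 1 ≤ N := by exact_mod_cast Finset.mem_range.1 hk
        have hkθ : ((k : ℝ) + 1) * θ ≤ N * θ := by gcongr
        have hk0 : 0 ≤ (k : ℝ) * θ := by positivity
        have h2 := hcos ((3 * k + 1) * θ / 2) (by positivity) (by linarith)
        have h3 := hcos ((3 * k + 2) * θ / 2) (by positivity) (by linarith)
        have h4 : 0 ≤ 2 * (1 - ε) := by linarith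
        exact mul_le_mul h2 h3 h4 (h4.trans h2)

/-! ### Large cases -/

/-- Compares the lower bound of the integral over `[0, 1 / N ^ 2]` with that of the tail. -/
theorem growth (N : ℕ) (hN : 75 ≤ N) : (13 / 5 : ℝ) ^ N * (105 * N ^ 6) ≤ 4 ^ N := by
  induction N, hN using Nat.le_induction with
  | base => norm_num
  | succ N hN ih =>
    have hN' : (75 : ℝ) ≤ N := by exact_mod_cast hN
    have h1 : ((N + 1 : ℕ) : ℝ) ^ 6 ≤ (76 / 75 * N) ^ 6 := by
      gcongr; push_cast; linarith
    calc (13 / 5 : ℝ) ^ (N + 1) * (105 * ((N + 1 : ℕ) : ℝ) ^ 6)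
        ≤ (13 / 5 : ℝ) ^ (N + 1) * (105 * (76 / 75 * N) ^ 6) := by gcongr
      _ = (13 / 5 * (76 / 75) ^ 6) * ((13 / 5 : ℝ) ^ N * (105 * N ^ 6)) := by ring
      _ ≤ 4 * ((13 / 5 : ℝ) ^ N * (105 * N ^ 6)) := by gcongr; norm_num
      _ ≤ 4 * 4 ^ N := by gcongr
      _ = 4 ^ (N + 1) := by ring

theorem integrand_main (N : ℕ) (hN : 75 ≤ N) (s : ℝ) (hs0 : 0 ≤ s) (hs : s ≤ 3 * N) (θ : ℝ)
    (h0 : 0 ≤ θ) (h1 : θ ≤ 1 / N ^ 2) :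
    4 ^ N * (3 / 20) * s * θ ^ 2 ≤ cosProd N θ * (Real.sin (s * θ) * Real.sin (θ / 2)) := by
  have hN' : (75 : ℝ) ≤ N := by exact_mod_cast hN
  have hNpos : (0 : ℝ) < N := by linarith
  have hπ := Real.pi_gt_three
  have hNθ : N * θ ≤ 1 / N := by
    calc N * θ ≤ N * (1 / N ^ 2) := by gcongr
      _ = 1 / N := by field_simp
  have hN1 : 1 / (N : ℝ) ≤ 1 / 75 := one_div_le_one_div_of_le (by norm_num) hN'
  have hsθ : s * θ ≤ 3 * (N * θ) := by
    calc s * θ ≤ 3 * N * θ := by gcongr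
      _ = _ := by ring
  have hθN : 75 * θ ≤ N * θ := by gcongr
  have hA := le_cosProd N (by omega) θ h0 h1
  have hB : 2 / Real.pi * (s * θ) ≤ Real.sin (s * θ) :=
    Real.mul_le_sin (by positivity) (by linarith)
  have hC : 2 / Real.pi * (θ / 2) ≤ Real.sin (θ / 2) :=
    Real.mul_le_sin (by positivity) (by linarith)
  have hπ2 : (2 / 5 : ℝ) ≤ (2 / Real.pi) ^ 2 := by
    rw [div_pow, le_div_iff₀ (by positivity)]
    nlinarith [Real.pi_lt_d2]
  calc 4 ^ N * (3 / 20) * s * θ ^ 2 = 4 ^ N * (3 / 4) * (2 / 5 * (s * θ ^ 2 / 2)) := by ring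
    _ ≤ 4 ^ N * (3 / 4) * ((2 / Real.pi) ^ 2 * (s * θ ^ 2 / 2)) := by gcongr
    _ = 4 ^ N * (3 / 4) * ((2 / Real.pi * (s * θ)) * (2 / Real.pi * (θ / 2))) := by ring
    _ ≤ _ := by
      have hB0 : 0 ≤ 2 / Real.pi * (s * θ) := by positivity
      have hC0 : 0 ≤ 2 / Real.pi * (θ / 2) := by positivity
      refine mul_le_mul hA (mul_le_mul hB hC hC0 (hB0.trans hB)) (by positivity)
        (le_trans (by positivity) hA)

/-- A lower bound valid on all of `[0, π]`: on `[0, π / (3 N)]` the integrand is nonnegative. -/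
theorem integrand_tail (N : ℕ) (hN : 75 ≤ N) (s : ℝ) (hs0 : 0 ≤ s) (hs : s ≤ 3 * N) (θ : ℝ)
    (h0 : 0 ≤ θ) (h1 : θ ≤ Real.pi) :
    -((13 / 5) ^ N * s / 2) * θ ^ 2 ≤ cosProd N θ * (Real.sin (s * θ) * Real.sin (θ / 2)) := by
  have hN' : (75 : ℝ) ≤ N := by exact_mod_cast hN
  have hNpos : (0 : ℝ) < N := by linarith
  have hπ := Real.pi_pos
  rcases le_total θ (Real.pi / (3 * N)) with h | h
  · rw [le_div_iff₀ (by positivity)] at h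
    have hsθ : s * θ ≤ 3 * N * θ := by gcongr
    have h2 : 0 ≤ cosProd N θ * (Real.sin (s * θ) * Real.sin (θ / 2)) :=
      mul_nonneg (cosProd_nonneg N θ h0 (by linarith)) (mul_nonneg
        (Real.sin_nonneg_of_nonneg_of_le_pi (by positivity) (by linarith))
        (Real.sin_nonneg_of_nonneg_of_le_pi (by positivity) (by linarith)))
    refine le_trans ?_ h2
    rw [neg_mul, neg_nonpos]
    positivity
  · have hF := abs_cosProd_le N θ (cosSum_le N (by omega) θ h h1)
    have hB : |Real.sin (s * θ)| ≤ s * θ :=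
      Real.abs_sin_le_abs.trans_eq (abs_of_nonneg (by positivity))
    have hC : |Real.sin (θ / 2)| ≤ θ / 2 :=
      Real.abs_sin_le_abs.trans_eq (abs_of_nonneg (by positivity))
    have : |cosProd N θ * (Real.sin (s * θ) * Real.sin (θ / 2))| ≤
        (13 / 5) ^ N * ((s * θ) * (θ / 2)) := by
      rw [abs_mul, abs_mul]
      gcongr
    calc -((13 / 5) ^ N * s / 2) * θ ^ 2 = -((13 / 5) ^ N * ((s * θ) * (θ / 2))) := by ring
      _ ≤ _ := (abs_le.1 this).1

theorem integral_nonneg_large (N : ℕ) (hN : 75 ≤ N) (s : ℝ) (hs0 : 0 ≤ s) (hs : s ≤ 3 * N) :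
    0 ≤ ∫ θ in (0 : ℝ)..Real.pi, cosProd N θ * (Real.sin (s * θ) * Real.sin (θ / 2)) := by
  have hN' : (75 : ℝ) ≤ N := by exact_mod_cast hN
  have hNpos : (0 : ℝ) < N := by linarith
  have hcont : Continuous fun θ => cosProd N θ * (Real.sin (s * θ) * Real.sin (θ / 2)) :=
    (continuous_cosProd N).mul (by fun_prop)
  have hint : ∀ a b : ℝ, IntervalIntegrable
      (fun θ => cosProd N θ * (Real.sin (s * θ) * Real.sin (θ / 2))) MeasureTheory.volume a b :=
    fun a b => hcont.intervalIntegrable a b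
  have hpow : ∀ c a b : ℝ, IntervalIntegrable (fun θ : ℝ => c * θ ^ 2) MeasureTheory.volume a b :=
    fun c a b => Continuous.intervalIntegrable (by fun_prop) a b
  set t : ℝ := 1 / (N : ℝ) ^ 2 with ht
  have ht0 : 0 ≤ t := by positivity
  have htπ : t ≤ Real.pi := by
    have : t ≤ 1 := by rw [ht, div_le_one (by positivity)]; nlinarith
    linarith [Real.pi_gt_three]
  have hmain : 4 ^ N * (3 / 20) * s * (t ^ 3 / 3) ≤
      ∫ θ in (0 : ℝ)..t, cosProd N θ * (Real.sin (s * θ) * Real.sin (θ / 2)) := by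
    have := intervalIntegral.integral_mono_on ht0 (hpow (4 ^ N * (3 / 20) * s) 0 t) (hint 0 t)
      fun θ hθ => integrand_main N hN s hs0 hs θ hθ.1 hθ.2
    rw [intervalIntegral.integral_const_mul, integral_pow] at this
    norm_num at this ⊢
    exact this
  have htail : -((13 / 5) ^ N * s / 2) * (Real.pi ^ 3 / 3) ≤
      ∫ θ in t..Real.pi, cosProd N θ * (Real.sin (s * θ) * Real.sin (θ / 2)) := by
    have := intervalIntegral.integral_mono_on htπ (hpow (-((13 / 5) ^ N * s / 2)) t Real.pi)
      (hint t Real.pi)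
      fun θ hθ => integrand_tail N hN s hs0 hs θ (ht0.trans hθ.1) hθ.2
    rw [intervalIntegral.integral_const_mul, integral_pow] at this
    refine le_trans ?_ this
    rw [neg_mul, neg_mul, neg_le_neg_iff]
    gcongr
    · norm_num
      positivity
    · norm_num
  rw [← intervalIntegral.integral_add_adjacent_intervals (hint 0 t) (hint t Real.pi)]
  have hπ3 : Real.pi ^ 3 ≤ 31.5 := by
    calc Real.pi ^ 3 ≤ 3.15 ^ 3 := by
          have := Real.pi_lt_d2
          have := Real.pi_pos
          gcongr
      _ ≤ 31.5 := by norm_num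
  have hg := growth N hN
  have hg' : (13 / 5 : ℝ) ^ N * 105 ≤ 4 ^ N * t ^ 3 := by
    rw [ht, one_div, inv_pow, ← pow_mul, ← div_eq_mul_inv, le_div_iff₀ (by positivity)]
    linarith
  have h1 : (13 / 5 : ℝ) ^ N * s / 2 * (Real.pi ^ 3 / 3) ≤ (13 / 5 : ℝ) ^ N * s / 2 * (31.5 / 3) := by
    gcongr
  have h2 := mul_le_mul_of_nonneg_right hg' hs0
  linarith

theorem central_large (N : ℕ) (hN : 75 ≤ N) : Central N := by
  intro m h1 h2
  have h1' : 3 * ((N : ℝ) - 1) ^ 2 < 2 * m := by exact_mod_cast h1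
  have h2' : 2 * (m : ℝ) ≤ 3 * (N : ℝ) ^ 2 := by exact_mod_cast h2
  have hI := integral_nonneg_large N hN ((3 * N ^ 2 + 1) / 2 - m) (by linarith) (by nlinarith)
  have hd := integral_diff N m _ rfl
  have h3 : 0 ≤ Real.pi * ((borweinCoeff N m : ℝ) - borweinCoeff N (m - 1)) := by rw [← hd]; positivity
  have h4 := nonneg_of_mul_nonneg_right h3 Real.pi_pos
  exact_mod_cast sub_nonneg.1 h4

/-! ### Conclusion -/

theorem main_of_central (hc : ∀ N : ℕ, 1 ≤ N → Central N) (n : ℕ) :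
    ∃ j ≤ 3 * (n + 1) ^ 2,
      (∀ a b : ℕ, a ≤ b → b ≤ j → (borweinPoly (n + 1)).coeff a ≤ (borweinPoly (n + 1)).coeff b) ∧
      (∀ a b : ℕ, j ≤ a → a ≤ b → b ≤ 3 * (n + 1) ^ 2 →
        (borweinPoly (n + 1)).coeff b ≤ (borweinPoly (n + 1)).coeff a) := by
  have hd : ((3 * (n + 1) ^ 2 : ℕ) : ℤ) = 3 * ((n + 1 : ℕ) : ℤ) ^ 2 := by push_cast; ring
  generalize hD : 3 * (n + 1) ^ 2 = d at *
  refine ⟨d / 2, Nat.div_le_self _ _, fun a b hab hb => ?_, fun a b ha hab hb => ?_⟩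
  · have := borweinCoeff_le_of_le hc (n + 1) a b (by omega) (by omega)
    rw [← coeff_borweinPoly, ← coeff_borweinPoly] at this
    exact_mod_cast this
  · zify
    rw [coeff_borweinPoly, coeff_borweinPoly]
    rcases Nat.lt_or_ge (d / 2) a with h | h
    · have := borweinCoeff_le_of_le hc (n + 1) (d - b) (d - a) (by omega) (by omega)
      rwa [hd, borweinCoeff_symm, borweinCoeff_symm] at this
    · have hb' : (b : ℤ) = d - (d - b) := by ring
      rw [hb', hd, borweinCoeff_symm]
      rcases Nat.lt_or_ge a b with h' | h'
      · exact borweinCoeff_le_of_le hc (n + 1) _ _ (by omega) (by omega)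
      · have : a = b := by omega
        rw [← hd, ← this, hd, borweinCoeff_symm]

end Borwein

theorem borwein_unimodal (n : ℕ) :
    ∃ j ≤ 3 * (n + 1) ^ 2,
      (∀ a b : ℕ, a ≤ b → b ≤ j →
        (∏ k ∈ Finset.range (n + 1),
            ((1 + (X : ℕ[X]) ^ (3 * k + 1)) * (1 + X ^ (3 * k + 2)))).coeff a ≤
        (∏ k ∈ Finset.range (n + 1),
            ((1 + (X : ℕ[X]) ^ (3 * k + 1)) * (1 + X ^ (3 * k + 2)))).coeff b) ∧
      (∀ a b : ℕ, j ≤ a → a ≤ b → b ≤ 3 * (n + 1) ^ 2 →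
        (∏ k ∈ Finset.range (n + 1),
            ((1 + (X : ℕ[X]) ^ (3 * k + 1)) * (1 + X ^ (3 * k + 2)))).coeff b ≤
        (∏ k ∈ Finset.range (n + 1),
            ((1 + (X : ℕ[X]) ^ (3 * k + 1)) * (1 + X ^ (3 * k + 2)))).coeff a) := by
  refine Borwein.main_of_central (fun N h1 => ?_) n
  rcases Nat.lt_or_ge N 75 with h | h
  · exact Borwein.central_small N h1 h
  · exact Borwein.central_large N h
end

section
/- For every integer n ≥ 1 and every integer m with 3n^2/2 ≤ m ≤ 3(n+1)^2/2, the coefficients of B_n(q) = ∏_{k=0}^n (1+q^{3k+1})(1+q^{3k+2}) satisfy a_n(m) ≥ a_n(m-1). -/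
/-!
Let `N = n + 1`. The polynomial `B` of the theorem has degree `3N²`, and on the unit circle
`B(e^{2iu}) = 4^N e^{3iN²u} P(u)` with `P(u) = ∏_{k<N} cos((3k+1)u) cos((3k+2)u)`. Fourier inversion
(`coeff_sub_coeff`) shows that the difference of the coefficients of index `m` and `m - 1` is a
positive multiple of `∫_0^{π/2} P(u) sin(Ku) sin u du`, where `K = 3N² - 2m + 1`. The hypotheses on
`m` say exactly that `1 ≤ K ≤ 6N - 2`.

Up to `u = π/(6N-2)` the integrand is nonnegative, because all cosines and `sin(Ku)` are; the part
with `u ≤ 1/N²` alone contributes a constant times `N^{-6}`. Beyond that point `P` is exponentially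
small: from `cos² x ≤ exp(cos 2x)/2` one gets `P(u)² ≤ 4^{-N} exp(S)`, with the Dirichlet-type sum
`S = ∑ (cos(2(3k+1)u) + cos(2(3k+2)u)) = cos u sin(6Nu) / sin(3u)`, and `S ≤ 0.45 N` there
(`phase_le`). For `N ≥ 64` the positive contribution wins (`integral_nonneg_of_large`).

For `n ≤ 62` the inequalities are verified by computation (`coeff_le_of_small`): the coefficients
are below `2^128`, so they are the base-`2^128` digits of `B(2^128)`, a number that the kernel can
compute and compare digit by digit.
-/

open Polynomial Finset

/-- The product over the first `N` values of `k`; the theorem concerns `borweinPoly (n + 1)`. -/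
noncomputable def borweinPoly (N : ℕ) : ℕ[X] :=
  ∏ k ∈ Finset.range N, ((1 + (X : ℕ[X]) ^ (3 * k + 1)) * (1 + X ^ (3 * k + 2)))

/-- `borweinPoly N` on the unit circle at `e^{2iu}`, without its phase and the factor `4 ^ N`. -/
noncomputable def cosProd (N : ℕ) (u : ℝ) : ℝ :=
  ∏ k ∈ Finset.range N, (Real.cos ((3 * k + 1) * u) * Real.cos ((3 * k + 2) * u))

lemma continuous_cosProd (N : ℕ) : Continuous (cosProd N) := by
  unfold cosProd; fun_prop

/-! ### Small `n` by computation -/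

/-- The coefficients of `p`, when all smaller than `b`, are the base-`b` digits of `p(b)`. -/
lemma digit_eval (b : ℕ) (m : ℕ) : ∀ p : ℕ[X], (∀ i, p.coeff i < b) →
    p.eval b / b ^ m % b = p.coeff m := by
  induction m with
  | zero =>
    intro p hp
    conv_lhs => rw [← p.divX_mul_X_add]
    simp [Nat.mod_eq_of_lt (hp 0)]
  | succ m ih =>
    intro p hp
    have hb : 0 < b := (Nat.zero_le _).trans_lt (hp 0)
    rw [pow_succ', ← Nat.div_div_eq_div_mul]
    have h : p.eval b / b = p.divX.eval b := by
      conv_lhs => rw [← p.divX_mul_X_add]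
      simp only [eval_add, eval_mul, eval_X, eval_C]
      rw [mul_comm, Nat.mul_add_div hb, Nat.div_eq_of_lt (hp 0), add_zero]
    rw [h, ih _ (fun i => by simpa [coeff_divX] using hp (i+1)), coeff_divX]

lemma coeff_le_eval_one (p : ℕ[X]) (i : ℕ) : p.coeff i ≤ p.eval 1 := by
  rw [eval_eq_sum_range]
  by_cases h : i ≤ p.natDegree
  · simpa using Finset.single_le_sum (f := fun i => p.coeff i) (fun _ _ => Nat.zero_le _)
      (Finset.mem_range.2 (Nat.lt_succ_of_le h))
  · rw [coeff_eq_zero_of_natDegree_lt (by omega)]; exact Nat.zero_le _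

lemma coeff_borwein_le (N i : ℕ) : (borweinPoly N).coeff i ≤ 4 ^ N := by
  refine (coeff_le_eval_one _ i).trans (le_of_eq ?_)
  simp [borweinPoly, eval_prod]

/-- The value of `borweinPoly N` at `2 ^ 128`: for `N ≤ 63` its base-`2 ^ 128` digits are the
coefficients of `borweinPoly N`. -/
def packed : ℕ → ℕ
  | 0 => 1
  | N + 1 => packed N * ((1 + 2 ^ (128 * (3 * N + 1))) * (1 + 2 ^ (128 * (3 * N + 2))))

lemma packed_eq (N : ℕ) : packed N = (borweinPoly N).eval (2 ^ 128) := by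
  induction N with
  | zero => simp [packed, borweinPoly]
  | succ N ih =>
    rw [packed, ih, borweinPoly, borweinPoly, Finset.prod_range_succ]
    simp only [eval_mul, eval_add, eval_one, eval_pow, eval_X, pow_mul]

/-- Whether the base-`2 ^ 128` digits of `w` at the positions `0, 1, …, c` weakly increase, where
`c` is the first argument and `w` the second. Matching on `w` makes the kernel evaluate it to a
literal before it is used twice. -/
def digitsIncrease : ℕ → ℕ → Bool
  | 0, _ => true
  | _ + 1, 0 => true
  | c + 1, k + 1 => Nat.ble ((k + 1) % 2 ^ 128) ((k + 1) / 2 ^ 128 % 2 ^ 128) &&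
      digitsIncrease c ((k + 1) / 2 ^ 128)

lemma digitsIncrease_spec (c : ℕ) : ∀ w : ℕ, digitsIncrease c w = true → ∀ l < c,
    w / (2 ^ 128) ^ l % 2 ^ 128 ≤ w / (2 ^ 128) ^ (l + 1) % 2 ^ 128 := by
  induction c with
  | zero => intro w _ l hl; omega
  | succ c ih =>
    intro w h l hl
    match w, h with
    | 0, _ => simp
    | k + 1, h =>
      rw [digitsIncrease, Bool.and_eq_true] at h
      cases l with
      | zero => simpa using Nat.le_of_ble_eq_true h.1
      | succ l =>
        have h2 := ih _ h.2 l (by omega)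
        rw [Nat.div_div_eq_div_mul, Nat.div_div_eq_div_mul, ← pow_succ', ← pow_succ'] at h2
        exact h2

/-- Whether the base-`2 ^ 128` digits of `v` at the positions `s, s + 1, …, s + c` weakly
increase. -/
def rowCheck (v s c : ℕ) : Bool :=
  digitsIncrease c (v / 2 ^ (128 * s) % 2 ^ (128 * (c + 1)))

lemma digit_of_block (b v s c l : ℕ) (hl : l ≤ c) :
    v / b ^ s % b ^ (c + 1) / b ^ l % b = v / b ^ (s + l) % b := by
  obtain ⟨d, rfl⟩ := Nat.exists_eq_add_of_le hl
  rw [show l + d + 1 = l + (d + 1) by ring, pow_add b l, Nat.mod_mul_right_div_self,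
    Nat.mod_mod_of_dvd _ (dvd_pow_self b d.succ_ne_zero), Nat.div_div_eq_div_mul, ← pow_add]

lemma rowCheck_spec (v s c : ℕ) (h : rowCheck v s c = true) (m : ℕ) (h1 : s ≤ m) (h2 : m < s + c) :
    v / (2 ^ 128) ^ m % 2 ^ 128 ≤ v / (2 ^ 128) ^ (m + 1) % 2 ^ 128 := by
  obtain ⟨l, rfl⟩ := Nat.exists_eq_add_of_le h1
  have h3 := digitsIncrease_spec c _ h l (by omega)
  rw [pow_mul, pow_mul] at h3
  rwa [digit_of_block _ _ _ _ _ (by omega), digit_of_block _ _ _ _ _ (by omega)] at h3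

/-- Whether the asserted inequalities hold for all `1 ≤ n ≤ L`: for each such `n` the coefficients
of `borweinPoly (n + 1)` are compared from position `⌈3n²/2⌉ - 1` to position `⌊3(n+1)²/2⌋`. -/
def allCheck : ℕ → Bool
  | 0 => true
  | n + 1 => rowCheck (packed (n + 2)) ((3 * (n + 1) ^ 2 + 1) / 2 - 1)
      (3 * (n + 2) ^ 2 / 2 - (3 * (n + 1) ^ 2 + 1) / 2 + 1) && allCheck n

lemma allCheck_true : allCheck 62 = true := by decide +kernel

lemma allCheck_spec (L : ℕ) (h : allCheck L = true) (n : ℕ) (h1 : 1 ≤ n) (h2 : n ≤ L) :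
    rowCheck (packed (n + 1)) ((3 * n ^ 2 + 1) / 2 - 1)
      (3 * (n + 1) ^ 2 / 2 - (3 * n ^ 2 + 1) / 2 + 1) = true := by
  induction L with
  | zero => omega
  | succ L ih =>
    rw [allCheck, Bool.and_eq_true] at h
    by_cases hn : n ≤ L
    · exact ih h.2 hn
    · obtain rfl : n = L + 1 := by omega
      exact h.1

lemma coeff_le_of_small (n m : ℕ) (hn : 1 ≤ n) (hn' : n ≤ 62)
    (hm1 : 3 * n ^ 2 ≤ 2 * m) (hm2 : 2 * m ≤ 3 * (n + 1) ^ 2) :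
    (borweinPoly (n + 1)).coeff (m - 1) ≤ (borweinPoly (n + 1)).coeff m := by
  have hn2 : 1 ≤ n ^ 2 := Nat.one_le_pow _ _ hn
  obtain ⟨l, rfl⟩ : ∃ l, m = l + 1 := ⟨m - 1, by omega⟩
  have hlt : ∀ i, (borweinPoly (n + 1)).coeff i < 2 ^ 128 := fun i =>
    calc _ ≤ 4 ^ (n + 1) := coeff_borwein_le _ _
      _ ≤ 4 ^ 63 := Nat.pow_le_pow_right (by norm_num) (by omega)
      _ < 2 ^ 128 := by norm_num
  have h := rowCheck_spec _ _ _ (allCheck_spec 62 allCheck_true n hn hn') l (by omega) (by omega)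
  rwa [packed_eq, digit_eval _ _ _ hlt, digit_eval _ _ _ hlt] at h

/-! ### The integral formula -/

lemma one_add_exp_pow (j : ℕ) (u : ℝ) :
    1 + Complex.exp (2 * u * Complex.I) ^ j =
      2 * Complex.exp (j * u * Complex.I) * (Real.cos (j * u) : ℝ) := by
  have h1 : Complex.exp (2 * u * Complex.I) ^ j =
      Complex.exp (j * u * Complex.I) * Complex.exp (j * u * Complex.I) := by
    rw [← Complex.exp_nat_mul, ← Complex.exp_add]; ring_nf
  have h2 : Complex.exp (j * u * Complex.I) * Complex.exp (-(j * u) * Complex.I) = 1 := by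
    rw [← Complex.exp_add]; simp
  rw [h1]
  push_cast
  rw [Complex.cos, ← h2]
  ring

/-- On the unit circle, `B(e^{2iu}) = 4^N e^{3iN²u} cosProd N u`, since `B` has degree `3N²`. -/
lemma aeval_borweinPoly (N : ℕ) (u : ℝ) :
    aeval (Complex.exp (2 * u * Complex.I)) (borweinPoly N) =
      4 ^ N * Complex.exp (3 * N ^ 2 * u * Complex.I) * (cosProd N u : ℝ) := by
  induction N with
  | zero => simp [borweinPoly, cosProd]
  | succ N ih =>
    have e1 := one_add_exp_pow (3 * N + 1) u
    have e2 := one_add_exp_pow (3 * N + 2) u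
    have hs : cosProd (N + 1) u = cosProd N u *
        (Real.cos ((3 * N + 1) * u) * Real.cos ((3 * N + 2) * u)) := Finset.prod_range_succ _ _
    rw [borweinPoly, Finset.prod_range_succ, map_mul, ← borweinPoly, ih, hs]
    simp only [map_mul, map_add, map_one, map_pow, aeval_X]
    rw [e1, e2]
    have h : Complex.exp (3 * (N + 1 : ℕ) ^ 2 * u * Complex.I) =
        Complex.exp (3 * N ^ 2 * u * Complex.I) * Complex.exp ((3 * N + 1 : ℕ) * u * Complex.I)
          * Complex.exp ((3 * N + 2 : ℕ) * u * Complex.I) := by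
      rw [← Complex.exp_add, ← Complex.exp_add]; push_cast; ring_nf
    rw [h]
    push_cast
    ring

lemma integral_exp_two_mul (z : ℤ) :
    ∫ u in (-(Real.pi / 2))..(Real.pi / 2), Complex.exp (2 * z * Complex.I * (u : ℝ)) =
      if z = 0 then (Real.pi : ℂ) else 0 := by
  split_ifs with h
  · subst h; simp
  · have hc : (2 * z * Complex.I : ℂ) ≠ 0 := by simp [h]
    rw [integral_exp_mul_complex hc]
    have : Complex.exp (2 * z * Complex.I * ((Real.pi / 2 : ℝ) : ℂ)) =
        Complex.exp (2 * z * Complex.I * ((-(Real.pi / 2) : ℝ) : ℂ)) := by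
      rw [Complex.exp_eq_exp_iff_exists_int]
      exact ⟨z, by push_cast; ring⟩
    rw [this, sub_self, zero_div]

/-- Coefficient extraction: Fourier inversion over a period of `e^{2iu}`. -/
lemma integral_aeval (p : ℕ[X]) (m : ℕ) :
    ∫ u in (-(Real.pi / 2))..(Real.pi / 2),
      aeval (Complex.exp (2 * (u : ℝ) * Complex.I)) p * Complex.exp (-(2 * m * u * Complex.I)) =
      Real.pi * p.coeff m := by
  have h : ∀ u : ℝ, aeval (Complex.exp (2 * (u : ℝ) * Complex.I)) p *
      Complex.exp (-(2 * m * u * Complex.I)) = ∑ i ∈ Finset.range (p.natDegree + 1),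
        (p.coeff i : ℂ) * Complex.exp (2 * ((i - m : ℤ) : ℂ) * Complex.I * (u : ℝ)) := by
    intro u
    rw [aeval_eq_sum_range, Finset.sum_mul]
    refine Finset.sum_congr rfl fun i _ => ?_
    rw [nsmul_eq_mul, mul_assoc, ← Complex.exp_nat_mul, ← Complex.exp_add]
    congr 2
    push_cast; ring
  simp_rw [h]
  rw [intervalIntegral.integral_finsetSum
    (fun i _ => Continuous.intervalIntegrable (by fun_prop) _ _)]
  simp_rw [intervalIntegral.integral_const_mul, integral_exp_two_mul]
  have h' : ∀ i : ℕ, ((i : ℤ) - m = 0) ↔ i = m := by intro i; omega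
  simp_rw [h', mul_ite, mul_zero]
  rw [Finset.sum_ite_eq' ]
  split_ifs with hm
  · ring
  · rw [coeff_eq_zero_of_natDegree_lt (by simpa [Nat.lt_succ_iff] using hm)]; simp

lemma pi_mul_coeff (N m : ℕ) :
    Real.pi * ((borweinPoly N).coeff m : ℝ) = 4 ^ N *
      ∫ u in (-(Real.pi / 2))..(Real.pi / 2),
        cosProd N u * Real.cos ((3 * N ^ 2 - 2 * m) * u) := by
  have h := integral_aeval (borweinPoly N) m
  have h2 : ∀ u : ℝ, aeval (Complex.exp (2 * (u : ℝ) * Complex.I)) (borweinPoly N) *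
      Complex.exp (-(2 * m * u * Complex.I)) = ((4 ^ N * cosProd N u : ℝ) : ℂ) *
        Complex.exp (((3 * N ^ 2 - 2 * m) * u : ℝ) * Complex.I) := by
    intro u
    rw [aeval_borweinPoly]
    have : Complex.exp (((3 * N ^ 2 - 2 * m) * u : ℝ) * Complex.I) =
      Complex.exp (3 * N ^ 2 * u * Complex.I) * Complex.exp (-(2 * m * u * Complex.I)) := by
      rw [← Complex.exp_add]; push_cast; ring_nf
    rw [this]; push_cast; ring
  simp_rw [h2] at h
  have h3 := congrArg Complex.re h
  have hInt : IntervalIntegrable (fun u : ℝ => ((4 ^ N * cosProd N u : ℝ) : ℂ) *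
        Complex.exp (((3 * N ^ 2 - 2 * m) * u : ℝ) * Complex.I)) MeasureTheory.volume
        (-(Real.pi / 2)) (Real.pi / 2) := by
    have := continuous_cosProd N
    exact Continuous.intervalIntegrable (by fun_prop) _ _
  have h4 := Complex.reCLM.intervalIntegral_comp_comm hInt
  simp only [Complex.reCLM_apply] at h4
  rw [← h4] at h3
  simp only [Complex.re_ofReal_mul, Complex.exp_ofReal_mul_I_re] at h3
  rw [← intervalIntegral.integral_const_mul]
  simp_rw [← mul_assoc]
  rw [h3]
  simp

/-- The difference of consecutive coefficients as a real integral. The integrand is even in `u`,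
which halves the range, and `cos((K-1)u) - cos((K+1)u) = 2 sin(Ku) sin u` with `K = 3N² - 2m + 1`. -/
lemma coeff_sub_coeff (N m : ℕ) (hm : 1 ≤ m) :
    Real.pi * (((borweinPoly N).coeff m : ℝ) - (borweinPoly N).coeff (m - 1)) = 4 ^ (N + 1) *
      ∫ u in (0 : ℝ)..(Real.pi / 2),
        cosProd N u * Real.sin ((3 * N ^ 2 - 2 * m + 1) * u) * Real.sin u := by
  set f : ℝ → ℝ := fun u => cosProd N u * Real.sin ((3 * N ^ 2 - 2 * m + 1) * u) * Real.sin u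
    with hf
  have hP := continuous_cosProd N
  have hfc : Continuous f := by fun_prop
  have heven : ∀ u, f (-u) = f u := by
    intro u
    simp [hf, cosProd]
  have hneg : ∫ u in (-(Real.pi / 2))..0, f u = ∫ u in (0 : ℝ)..(Real.pi / 2), f u := by
    have := intervalIntegral.integral_comp_neg (a := 0) (b := Real.pi / 2) f
    simp only [heven, neg_zero] at this
    exact this.symm
  rw [mul_sub, pi_mul_coeff, pi_mul_coeff, ← mul_sub, ← intervalIntegral.integral_sub
    (Continuous.intervalIntegrable (by fun_prop) _ _)
    (Continuous.intervalIntegrable (by fun_prop) _ _)]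
  have hpt : ∀ u : ℝ, cosProd N u * Real.cos ((3 * N ^ 2 - 2 * m) * u) -
      cosProd N u * Real.cos ((3 * N ^ 2 - 2 * (m - 1 : ℕ)) * u) = 2 * f u := by
    intro u
    have e1 : ((3 * N ^ 2 - 2 * m) * u : ℝ) = (3 * N ^ 2 - 2 * m + 1) * u - u := by ring
    have e2 : ((3 * N ^ 2 - 2 * (m - 1 : ℕ)) * u : ℝ) = (3 * N ^ 2 - 2 * m + 1) * u + u := by
      push_cast [hm]; ring
    rw [e1, e2, Real.cos_sub, Real.cos_add]
    simp only [hf]; ring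
  simp_rw [hpt]
  rw [intervalIntegral.integral_const_mul, ← intervalIntegral.integral_add_adjacent_intervals
    (hfc.intervalIntegrable (-(Real.pi / 2)) 0) (hfc.intervalIntegrable 0 (Real.pi / 2)), hneg]
  ring

/-! ### Estimates for the cosine product -/

/-- This is `1 + y ≤ exp y` at `y = cos 2x`. -/
lemma cos_sq_le (x : ℝ) : Real.cos x ^ 2 ≤ Real.exp (Real.cos (2 * x)) / 2 := by
  have := Real.add_one_le_exp (Real.cos (2 * x))
  rw [Real.cos_two_mul] at *
  linarith

/-- The Dirichlet-type kernel `∑_{k<N} 2 cos((2k+1)v) = sin(2Nv) / sin v`. -/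
noncomputable def oddCosSum (N : ℕ) (v : ℝ) : ℝ :=
  ∑ k ∈ Finset.range N, 2 * Real.cos ((2 * k + 1) * v)

lemma oddCosSum_mul_sin (N : ℕ) (v : ℝ) : oddCosSum N v * Real.sin v = Real.sin (2 * N * v) := by
  induction N with
  | zero => simp [oddCosSum]
  | succ N ih =>
    rw [oddCosSum, Finset.sum_range_succ, ← oddCosSum, add_mul, ih]
    have e1 : (2 * N * v : ℝ) = (2 * N + 1) * v - v := by ring
    have e2 : (2 * (N + 1 : ℕ) * v : ℝ) = (2 * N + 1) * v + v := by push_cast; ring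
    rw [e1, e2, Real.sin_sub, Real.sin_add]
    ring

/-- Apply `cos_sq_le` to every factor; the two exponents from the `k`-th pair add up to
`cos(2(3k+1)u) + cos(2(3k+2)u) = 2 cos u cos(3(2k+1)u)`. -/
lemma cosProd_sq_le (N : ℕ) (u : ℝ) :
    cosProd N u ^ 2 ≤ Real.exp (Real.cos u * oddCosSum N (3 * u)) / 4 ^ N := by
  induction N with
  | zero => simp [cosProd, oddCosSum]
  | succ N ih =>
    have h1 := cos_sq_le ((3 * N + 1) * u)
    have h2 := cos_sq_le ((3 * N + 2) * u)
    have h3 : Real.cos u * oddCosSum (N + 1) (3 * u) = Real.cos u * oddCosSum N (3 * u) +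
        (Real.cos (2 * ((3 * N + 1) * u)) + Real.cos (2 * ((3 * N + 2) * u))) := by
      rw [oddCosSum, Finset.sum_range_succ, ← oddCosSum]
      have e1 : 2 * ((3 * N + 1) * u) = (2 * N + 1) * (3 * u) - u := by ring
      have e2 : 2 * ((3 * N + 2) * u) = (2 * N + 1) * (3 * u) + u := by ring
      rw [e1, e2, Real.cos_sub, Real.cos_add]; ring
    rw [h3, Real.exp_add, Real.exp_add]
    rw [cosProd, Finset.prod_range_succ, ← cosProd, mul_pow, mul_pow]
    calc _ ≤ Real.exp (Real.cos u * oddCosSum N (3 * u)) / 4 ^ N *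
          (Real.exp (Real.cos (2 * ((3 * N + 1) * u))) / 2 *
            (Real.exp (Real.cos (2 * ((3 * N + 2) * u))) / 2)) := by gcongr
      _ = _ := by rw [pow_succ]; ring

lemma sin_lower {x : ℝ} (h0 : 0 < x) (h1 : x ≤ 1 / 2) : 0.9 * x ≤ Real.sin x := by
  have := Real.sin_gt_sub_cube h0
  nlinarith [mul_pos h0 h0, mul_nonneg h0.le (by nlinarith : 0 ≤ 1 / 4 - x ^ 2)]

lemma sin_le_sin_of_mem {a v : ℝ} (h0 : 0 ≤ a) (h1 : a ≤ v) (h2 : v ≤ Real.pi - a) :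
    Real.sin a ≤ Real.sin v := by
  rcases le_total v (Real.pi / 2) with h | h
  · exact Real.sin_le_sin_of_le_of_le_pi_div_two (by linarith [Real.pi_pos]) h h1
  · rw [← Real.sin_pi_sub v]
    exact Real.sin_le_sin_of_le_of_le_pi_div_two (by linarith [Real.pi_pos]) (by linarith)
      (by linarith)

lemma oddCosSum_le_of_abs_sin {N : ℕ} {v s : ℝ} (hs : 0 < s) (h : s ≤ |Real.sin v|) :
    oddCosSum N v ≤ 1 / s := by
  have h1 : |oddCosSum N v| * |Real.sin v| ≤ 1 := by
    rw [← abs_mul, oddCosSum_mul_sin]; exact Real.abs_sin_le_one _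
  rw [le_div_iff₀ hs]
  calc _ ≤ |oddCosSum N v| * |Real.sin v| :=
        mul_le_mul (le_abs_self _) h hs.le (abs_nonneg _)
    _ ≤ 1 := h1

/-- The kernel changes sign under `v ↦ v + π`, and on its main lobe around `0` it is nonnegative. -/
lemma oddCosSum_nonpos_of_near_pi {N : ℕ} (hN : 0 < N) {w : ℝ}
    (hw : |w| ≤ Real.pi / (2 * N)) : oddCosSum N (Real.pi + w) ≤ 0 := by
  have hshift : oddCosSum N (Real.pi + w) = -oddCosSum N |w| := by
    rw [oddCosSum, oddCosSum, ← Finset.sum_neg_distrib]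
    refine Finset.sum_congr rfl fun k _ => ?_
    have e : (2 * k + 1) * (Real.pi + w) = ((2 * k + 1) * w + Real.pi) + k * (2 * Real.pi) := by
      ring
    have e' : (2 * k + 1) * |w| = |(2 * k + 1) * w| := by
      rw [abs_mul, abs_of_nonneg (by positivity : (0 : ℝ) ≤ 2 * k + 1)]
    rw [e, e', Real.cos_abs, Real.cos_add_nat_mul_two_pi, Real.cos_add_pi]
    ring
  have hN1 : (1 : ℝ) ≤ N := by exact_mod_cast hN
  rw [le_div_iff₀ (by positivity)] at hw
  rw [hshift, neg_nonpos]
  rcases (abs_nonneg w).eq_or_lt with h0 | h0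
  · rw [← h0]
    exact Finset.sum_nonneg fun k _ => by simp
  · have hs : 0 < Real.sin |w| := Real.sin_pos_of_pos_of_lt_pi h0 (by nlinarith [Real.pi_pos])
    have hT := oddCosSum_mul_sin N |w|
    have : 0 ≤ Real.sin (2 * N * |w|) :=
      Real.sin_nonneg_of_nonneg_of_le_pi (by positivity) (by linarith)
    exact nonneg_of_mul_nonneg_left (hT ▸ this) hs

/-- The exponent in `cosProd_sq_le` away from the main lobe of `cosProd`. With `a = π/(2N)` and
`v = 3u`, the kernel is nonpositive for `v ≤ 2a` (the first sidelobe) and for `|v - π| ≤ a`.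
Elsewhere it is at most `1/|sin v|`, which is about `N/π` or less for `2a ≤ v ≤ π - 2a`; in the
remaining ranges it may be twice as large, but there `cos u` is close to `1/2` or smaller. -/
lemma phase_le {N : ℕ} (hN : 64 ≤ N) {u : ℝ} (h1 : Real.pi / (6 * N - 2) ≤ u)
    (h2 : u ≤ Real.pi / 2) : Real.cos u * oddCosSum N (3 * u) ≤ 0.45 * N := by
  have hNr : (64 : ℝ) ≤ N := by exact_mod_cast hN
  have hpi := Real.pi_gt_d2
  have hpi' := Real.pi_lt_d2
  have hu : 0 < u := lt_of_lt_of_le (by apply div_pos <;> linarith) h1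
  have hc0 : 0 ≤ Real.cos u := Real.cos_nonneg_of_mem_Icc ⟨by linarith, h2⟩
  have hc1 := Real.cos_le_one u
  rw [div_le_iff₀ (by linarith)] at h1
  set a : ℝ := Real.pi / (2 * N) with ha
  have haN : a * N = Real.pi / 2 := by rw [ha]; field_simp
  have ha0 : 0 < a := by positivity
  have ha1 : a ≤ 0.025 := by nlinarith
  have hsa : 0.9 * a ≤ Real.sin a := sin_lower ha0 (by linarith)
  have hs2a : 0.9 * (2 * a) ≤ Real.sin (2 * a) := sin_lower (by linarith) (by linarith)
  have hb : 1 / (0.9 * a) ≤ 0.71 * N := by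
    rw [div_le_iff₀ (by positivity)]; nlinarith
  have hb2 : 1 / (0.9 * (2 * a)) ≤ 0.36 * N := by
    rw [div_le_iff₀ (by positivity)]; nlinarith
  have nonpos : oddCosSum N (3 * u) ≤ 0 → Real.cos u * oddCosSum N (3 * u) ≤ 0.45 * N :=
    fun h => (mul_nonpos_of_nonneg_of_nonpos hc0 h).trans (by positivity)
  have near : Real.pi / 3 - 2 * a / 3 ≤ u → Real.cos u ≤ 0.6 := by
    intro h
    have : Real.cos u ≤ Real.cos (Real.pi / 3 - 2 * a / 3) :=
      Real.cos_le_cos_of_nonneg_of_le_pi (by linarith) (by linarith) h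
    rw [Real.cos_sub, Real.cos_pi_div_three, Real.sin_pi_div_three] at this
    have h3 : √3 ≤ 2 := Real.sqrt_le_iff.2 (by norm_num)
    have h4 : Real.sin (2 * a / 3) ≤ 2 * a / 3 := Real.sin_le (by linarith)
    have h5 : 0 ≤ Real.sin (2 * a / 3) := Real.sin_nonneg_of_nonneg_of_le_pi (by linarith)
      (by linarith)
    nlinarith [Real.cos_le_one (2 * a / 3), Real.sqrt_nonneg 3]
  have mid : Real.pi / 3 - 2 * a / 3 ≤ u → oddCosSum N (3 * u) ≤ 0.71 * N →
      Real.cos u * oddCosSum N (3 * u) ≤ 0.45 * N := by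
    intro h h'
    nlinarith [near h]
  rcases le_total (3 * u) (2 * a) with hA | hA
  · apply nonpos
    have hs : 0 < Real.sin (3 * u) := Real.sin_pos_of_pos_of_lt_pi (by linarith) (by linarith)
    have hT := oddCosSum_mul_sin N (3 * u)
    have hle : Real.sin (2 * N * (3 * u)) ≤ 0 := by
      have := Real.sin_nonneg_of_nonneg_of_le_pi (x := 2 * N * (3 * u) - Real.pi)
        (by linarith) (by nlinarith)
      rw [Real.sin_sub_pi] at this
      linarith
    nlinarith
  rcases le_total (3 * u) (Real.pi - 2 * a) with hB | hB
  · have := sin_le_sin_of_mem (by linarith) hA hB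
    have h := oddCosSum_le_of_abs_sin (N := N) (v := 3 * u) (s := 0.9 * (2 * a)) (by positivity)
      ((hs2a.trans this).trans (le_abs_self _))
    nlinarith
  rcases le_total (3 * u) (Real.pi - a) with hC | hC
  · have := sin_le_sin_of_mem ha0.le (by linarith : a ≤ 3 * u) hC
    have h := oddCosSum_le_of_abs_sin (N := N) (v := 3 * u) (s := 0.9 * a) (by positivity)
      ((hsa.trans this).trans (le_abs_self _))
    exact mid (by linarith) (h.trans hb)
  rcases le_total (3 * u) (Real.pi + a) with hD | hD
  · apply nonpos
    have := oddCosSum_nonpos_of_near_pi (N := N) (by omega) (w := 3 * u - Real.pi)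
      (abs_le.2 ⟨by linarith, by linarith⟩)
    simpa using this
  · have := sin_le_sin_of_mem (v := 3 * u - Real.pi) ha0.le (by linarith) (by linarith)
    rw [Real.sin_sub_pi] at this
    have h := oddCosSum_le_of_abs_sin (N := N) (v := 3 * u) (s := 0.9 * a) (by positivity)
      ((hsa.trans this).trans (neg_le_abs _))
    exact mid (by linarith) (h.trans hb)

lemma exp_bound : Real.exp 0.45 ≤ 1.6 := by
  -- raising to the 20th power reduces the claim to a bound on `e ^ 9`
  refine le_of_pow_le_pow_left₀ (n := 20) (by norm_num) (by norm_num) ?_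
  rw [← Real.exp_nat_mul]
  have : ((20 : ℕ) : ℝ) * 0.45 = (9 : ℕ) * 1 := by norm_num
  rw [this, Real.exp_nat_mul]
  calc Real.exp 1 ^ 9 ≤ 2.7182818286 ^ 9 := by
        gcongr; exact Real.exp_one_lt_d9.le
    _ ≤ _ := by norm_num

lemma pow_bound {N : ℕ} (hN : 64 ≤ N) : (0.4 : ℝ) ^ N * (N : ℝ) ^ 12 ≤ 0.03 ^ 2 := by
  induction N, hN using Nat.le_induction with
  | base => norm_num
  | succ N hN ih =>
    have hNr : (64 : ℝ) ≤ N := by exact_mod_cast hN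
    have h : ((N + 1 : ℕ) : ℝ) ≤ 65 / 64 * N := by push_cast; linarith
    calc (0.4 : ℝ) ^ (N + 1) * ((N + 1 : ℕ) : ℝ) ^ 12
        ≤ 0.4 ^ (N + 1) * (65 / 64 * N) ^ 12 := by gcongr
      _ = (0.4 * (65 / 64) ^ 12) * (0.4 ^ N * (N : ℝ) ^ 12) := by ring
      _ ≤ 1 * (0.4 ^ N * (N : ℝ) ^ 12) := by gcongr; norm_num
      _ ≤ _ := by linarith

/-- Exponential decay of `cosProd` outside the main lobe, in the polynomial form used below. -/
lemma abs_cosProd_le {N : ℕ} (hN : 64 ≤ N) {u : ℝ} (h1 : Real.pi / (6 * N - 2) ≤ u)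
    (h2 : u ≤ Real.pi / 2) : |cosProd N u| ≤ 0.03 / (N : ℝ) ^ 6 := by
  have hN0 : (0 : ℝ) < N := by exact_mod_cast (by omega : 0 < N)
  refine abs_le_of_sq_le_sq ?_ (by positivity)
  calc cosProd N u ^ 2 ≤ Real.exp (Real.cos u * oddCosSum N (3 * u)) / 4 ^ N := cosProd_sq_le N u
    _ ≤ Real.exp (N * 0.45) / 4 ^ N := by
        have := phase_le hN h1 h2
        rw [mul_comm (0.45 : ℝ)] at this
        gcongr
    _ = (Real.exp 0.45 / 4) ^ N := by rw [Real.exp_nat_mul, div_pow]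
    _ ≤ 0.4 ^ N := by gcongr; linarith [exp_bound]
    _ ≤ 0.03 ^ 2 / (N : ℝ) ^ 12 := by rw [le_div_iff₀ (by positivity)]; exact pow_bound hN
    _ = _ := by rw [div_pow, ← pow_mul]

/-- Each factor is at least `1 - (3Nu)²/2`; Bernoulli's inequality bounds the product. -/
lemma half_le_cosProd {N : ℕ} (hN : 64 ≤ N) {u : ℝ} (h0 : 0 ≤ u) (h1 : u ≤ 1 / (N : ℝ) ^ 2) :
    1 / 2 ≤ cosProd N u := by
  have hNr : (64 : ℝ) ≤ N := by exact_mod_cast hN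
  set t : ℝ := (3 * N * u) ^ 2 / 2 with ht
  have hNu : N * u ≤ 1 / N := by
    calc N * u ≤ N * (1 / (N : ℝ) ^ 2) := by gcongr
      _ = 1 / N := by field_simp
  have hNu' : 1 / (N : ℝ) ≤ 1 / 64 := by gcongr
  have hNu0 : 0 ≤ N * u := by positivity
  have ht1 : t ≤ 1 / 2 := by rw [ht]; nlinarith
  have hNt : N * t ≤ 9 / 128 := by
    have h5 : N * (N * u) ≤ 1 := by
      calc N * (N * u) ≤ N * (1 / N) := by gcongr
        _ = 1 := by field_simp
    have : N * t = 9 / 2 * ((N * (N * u)) * (N * u)) := by rw [ht]; ring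
    rw [this]
    nlinarith
  have hcos : ∀ x : ℝ, 0 ≤ x → x ≤ 3 * N → 1 - t ≤ Real.cos (x * u) := by
    intro x hx hx'
    have := Real.one_sub_sq_div_two_le_cos (x := x * u)
    have h6 : (x * u) ^ 2 ≤ (3 * N * u) ^ 2 := by gcongr
    rw [ht]; linarith
  have hpow : ((1 - t) * (1 - t)) ^ N ≤ cosProd N u := by
    rw [cosProd, ← Finset.card_range N, ← Finset.prod_const, Finset.card_range]
    refine Finset.prod_le_prod (fun _ _ => by nlinarith) fun k hk => ?_
    have hk' : (k : ℝ) + 1 ≤ N := by exact_mod_cast Finset.mem_range.1 hk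
    have a1 := hcos (3 * k + 1) (by positivity) (by linarith)
    have a2 := hcos (3 * k + 2) (by positivity) (by linarith)
    exact mul_le_mul a1 a2 (by linarith) (by linarith)
  refine le_trans ?_ hpow
  have hB := one_add_mul_le_pow (a := -t) (by linarith) (2 * N)
  have e : ((1 - t) * (1 - t)) ^ N = (1 + -t) ^ (2 * N) := by
    rw [pow_mul]; congr 1; ring
  rw [e]
  push_cast at hB
  linarith

lemma cosProd_nonneg {N : ℕ} (hN : 64 ≤ N) {u : ℝ} (h0 : 0 ≤ u)
    (h1 : u ≤ Real.pi / (6 * N - 2)) : 0 ≤ cosProd N u := by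
  have hNr : (64 : ℝ) ≤ N := by exact_mod_cast hN
  rw [le_div_iff₀ (by linarith)] at h1
  have hcos : ∀ x : ℝ, 0 ≤ x → x ≤ 3 * N - 1 → 0 ≤ Real.cos (x * u) := by
    intro x hx hx'
    refine Real.cos_nonneg_of_mem_Icc ⟨?_, ?_⟩
    · have := Real.pi_pos
      have : 0 ≤ x * u := by positivity
      linarith
    · nlinarith
  refine Finset.prod_nonneg fun k hk => ?_
  have hk' : (k : ℝ) + 1 ≤ N := by exact_mod_cast Finset.mem_range.1 hk
  exact mul_nonneg (hcos _ (by positivity) (by linarith)) (hcos _ (by positivity) (by linarith))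

/-- On `[0, 1/N²]` the integral is at least `0.05/N⁶`. On `[1/N², π/(6N-2)]` the integrand is
nonnegative: no cosine has changed sign, and `K ≤ 6N - 2` keeps `Ku ≤ π`. On the remaining range
the integral is at most `0.05/N⁶` in absolute value. -/
lemma integral_nonneg_of_large {N : ℕ} (hN : 64 ≤ N) {K : ℝ} (hK1 : 1 ≤ K)
    (hK2 : K ≤ 6 * N - 2) :
    0 ≤ ∫ u in (0 : ℝ)..(Real.pi / 2), cosProd N u * Real.sin (K * u) * Real.sin u := by
  have hNr : (64 : ℝ) ≤ N := by exact_mod_cast hN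
  have hpi := Real.pi_gt_d2
  have hpi' := Real.pi_lt_d2
  set f : ℝ → ℝ := fun u => cosProd N u * Real.sin (K * u) * Real.sin u with hf
  have hP := continuous_cosProd N
  have hfc : Continuous f := by fun_prop
  set u0 : ℝ := Real.pi / (6 * N - 2) with hu0
  set u1 : ℝ := 1 / (N : ℝ) ^ 2 with hu1
  have hu1pos : 0 < u1 := by positivity
  have hu1N : u1 * (6 * N) ≤ 1 := by
    rw [hu1, div_mul_eq_mul_div, div_le_one (by positivity)]; nlinarith
  have h10 : u1 ≤ u0 := by
    rw [hu0, le_div_iff₀ (by linarith)]; nlinarith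
  have h0half : u0 ≤ Real.pi / 2 := by rw [hu0]; gcongr; linarith
  have hmain : 0.05 / (N : ℝ) ^ 6 ≤ ∫ u in (0 : ℝ)..u1, f u := by
    have hle : ∫ u in (0 : ℝ)..u1, 0.15 * u ^ 2 ≤ ∫ u in (0 : ℝ)..u1, f u := by
      refine intervalIntegral.integral_mono_on hu1pos.le
        (Continuous.intervalIntegrable (by fun_prop) _ _) (hfc.intervalIntegrable _ _) ?_
      intro u hu
      have hPu := half_le_cosProd hN hu.1 hu.2
      have hKu : K * u ≤ 1 := by nlinarith [hu.1, hu.2]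
      have hsu : 0.6 * u ≤ Real.sin u := by
        have := Real.mul_le_sin hu.1 (by nlinarith [hu.1, hu.2])
        refine le_trans ?_ this
        gcongr
        · exact hu.1
        · rw [le_div_iff₀ Real.pi_pos]; linarith
      have hsK : Real.sin u ≤ Real.sin (K * u) :=
        Real.sin_le_sin_of_le_of_le_pi_div_two (by linarith [hu.1]) (by linarith)
          (by nlinarith [hu.1])
      have h6 : 0 ≤ 0.6 * u := by linarith [hu.1]
      calc 0.15 * u ^ 2 ≤ 1 / 2 * (0.6 * u) * (0.6 * u) := by nlinarith [sq_nonneg u]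
        _ ≤ cosProd N u * Real.sin (K * u) * Real.sin u := by
          have hsK' : 0.6 * u ≤ Real.sin (K * u) := hsu.trans hsK
          have hsK0 : 0 ≤ Real.sin (K * u) := h6.trans hsK'
          gcongr
    refine le_trans (le_of_eq ?_) hle
    rw [intervalIntegral.integral_const_mul, integral_pow, hu1, div_pow, ← pow_mul]
    norm_num
    ring
  have hmid : 0 ≤ ∫ u in u1..u0, f u := by
    refine intervalIntegral.integral_nonneg h10 fun u hu => ?_
    have hu0' : 0 ≤ u := hu1pos.le.trans hu.1
    have hKu : K * u ≤ Real.pi := by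
      have := hu.2
      rw [hu0, le_div_iff₀ (by linarith)] at this
      nlinarith
    exact mul_nonneg (mul_nonneg (cosProd_nonneg hN hu0' hu.2)
      (Real.sin_nonneg_of_nonneg_of_le_pi (by positivity) hKu))
      (Real.sin_nonneg_of_nonneg_of_le_pi hu0' (by linarith [hu.2]))
  have htail : |∫ u in u0..(Real.pi / 2), f u| ≤ 0.05 / (N : ℝ) ^ 6 := by
    have hb : ∀ u ∈ Set.uIoc u0 (Real.pi / 2), ‖f u‖ ≤ 0.03 / (N : ℝ) ^ 6 := by
      intro u hu
      rw [Set.uIoc_of_le h0half] at hu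
      have h := abs_cosProd_le hN hu.1.le hu.2
      rw [Real.norm_eq_abs, hf, abs_mul, abs_mul]
      calc _ ≤ 0.03 / (N : ℝ) ^ 6 * 1 * 1 := by
            gcongr
            · exact Real.abs_sin_le_one _
            · exact Real.abs_sin_le_one _
        _ = _ := by ring
    have := intervalIntegral.norm_integral_le_of_norm_le_const hb
    rw [Real.norm_eq_abs, abs_of_nonneg (by linarith : 0 ≤ Real.pi / 2 - u0)] at this
    refine this.trans ?_
    rw [div_mul_eq_mul_div]
    gcongr
    linarith
  rw [← intervalIntegral.integral_add_adjacent_intervals (hfc.intervalIntegrable 0 u0)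
    (hfc.intervalIntegrable u0 _), ← intervalIntegral.integral_add_adjacent_intervals
    (hfc.intervalIntegrable 0 u1) (hfc.intervalIntegrable u1 _)]
  linarith [(abs_le.1 htail).1]

theorem borwein_middle_increase (n m : ℕ) (hn : 1 ≤ n)
    (hm1 : 3 * n ^ 2 ≤ 2 * m) (hm2 : 2 * m ≤ 3 * (n + 1) ^ 2) :
    (∏ k ∈ Finset.range (n + 1),
        ((1 + (X : ℕ[X]) ^ (3 * k + 1)) * (1 + X ^ (3 * k + 2)))).coeff (m - 1) ≤
    (∏ k ∈ Finset.range (n + 1),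
        ((1 + (X : ℕ[X]) ^ (3 * k + 1)) * (1 + X ^ (3 * k + 2)))).coeff m := by
  change (borweinPoly (n + 1)).coeff (m - 1) ≤ (borweinPoly (n + 1)).coeff m
  rcases le_or_gt n 62 with hs | hs
  · exact coeff_le_of_small n m hn hs hm1 hm2
  have hm : 1 ≤ m := by
    have : 1 ≤ n ^ 2 := Nat.one_le_pow _ _ hn
    omega
  have h1 : (3 * n ^ 2 : ℝ) ≤ 2 * m := by exact_mod_cast hm1
  have h2 : (2 * m : ℝ) ≤ 3 * (n + 1) ^ 2 := by exact_mod_cast hm2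
  have hInt := integral_nonneg_of_large (N := n + 1) (by omega)
    (K := 3 * (n + 1 : ℕ) ^ 2 - 2 * m + 1) (by push_cast; linarith) (by push_cast; linarith)
  have h := coeff_sub_coeff (n + 1) m hm
  have h3 : 0 ≤ Real.pi * (((borweinPoly (n + 1)).coeff m : ℝ) -
      (borweinPoly (n + 1)).coeff (m - 1)) := by
    rw [h]; positivity
  have h4 := nonneg_of_mul_nonneg_right h3 Real.pi_pos
  exact_mod_cast sub_nonneg.1 h4
end
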